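/- arXiv:1103.0412 — 4 statements merged into one kernel-verified Lean document; each statement's English description precedes it below -/
import Mathlib

section
/- Let a₁, …, aₙ be vertices of a convex polygon in clockwise order, with distinct pairwise distances sorted decreasingly as d₁ > d₂ > ⋯. Suppose a = a₁, b = a_x, c = a_y, d = a_z with 1 < x ≤ y < z ≤ n, dist(b,c) ≥ d_i and dist(a,d) ≥ d_j. Then min(x − 2, z − y − 1) ≤ i + j − 3; that is, either between a and b or between c and d there are at most i + j − 3 other vertices of the polygon. -/
/-- The cross product (signed area determinant) of two vectors in the Euclidean plane. -/
noncomputable def cross2 (u v : EuclideanSpace ℝ (Fin 2)) : ℝ := u 0 * v 1 - u 1 * v 0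

/-- The vertices `P 0, P 1, …` form a convex polygon listed in clockwise order. -/
def ClockwiseConvexPos {n : ℕ} (P : Fin n → EuclideanSpace ℝ (Fin 2)) : Prop :=
  ∀ i j k : Fin n, i < j → j < k → cross2 (P j - P i) (P k - P i) < 0

/-- Orientation of three points. -/
noncomputable def ori (a b c : EuclideanSpace ℝ (Fin 2)) : ℝ := cross2 (b - a) (c - a)

/-- Dot product of `a - b` and `c - b`: the angle at `b`. -/
noncomputable def dotAt (a b c : EuclideanSpace ℝ (Fin 2)) : ℝ :=
  (a 0 - b 0) * (c 0 - b 0) + (a 1 - b 1) * (c 1 - b 1)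

lemma ori_eq (a b c : EuclideanSpace ℝ (Fin 2)) :
    ori a b c = (b 0 - a 0) * (c 1 - a 1) - (b 1 - a 1) * (c 0 - a 0) := by
  simp [ori, cross2]

lemma ori_rot (a b c : EuclideanSpace ℝ (Fin 2)) : ori b c a = ori a b c := by
  simp only [ori_eq]; ring

lemma ori_swap (a b c : EuclideanSpace ℝ (Fin 2)) : ori c b a = - ori a b c := by
  simp only [ori_eq]; ring

lemma dist_lt_of (a b c e : EuclideanSpace ℝ (Fin 2))
    (h : (a 0 - b 0)^2 + (a 1 - b 1)^2 < (c 0 - e 0)^2 + (c 1 - e 1)^2) :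
    dist a b < dist c e := by
  rw [EuclideanSpace.dist_eq, EuclideanSpace.dist_eq]
  apply Real.sqrt_lt_sqrt (by positivity)
  simpa [Fin.sum_univ_two, Real.dist_eq, sq_abs] using h

lemma far_of_dot (b' b c : EuclideanSpace ℝ (Fin 2)) (hne : b' ≠ b)
    (h : dotAt b' b c ≤ 0) : dist b c < dist b' c := by
  apply dist_lt_of
  have : 0 < (b' 0 - b 0)^2 + (b' 1 - b 1)^2 := by
    by_contra hc
    apply hne
    have h0 : b' 0 - b 0 = 0 := by nlinarith [sq_nonneg (b' 0 - b 0), sq_nonneg (b' 1 - b 1)]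
    have h1 : b' 1 - b 1 = 0 := by nlinarith [sq_nonneg (b' 0 - b 0), sq_nonneg (b' 1 - b 1)]
    ext k
    fin_cases k
    · simpa using sub_eq_zero.1 h0
    · simpa using sub_eq_zero.1 h1
  unfold dotAt at h
  nlinarith

lemma dot_key (a b' b c : EuclideanSpace ℝ (Fin 2)) :
    dotAt b' b c * ori a b c = dotAt a b c * ori b' b c
      - ((c 0 - b 0)^2 + (c 1 - b 1)^2) * ori a b' b := by
  simp only [ori_eq, dotAt]; ring

/-- Clockwise `a, b', b, c` with non-acute angle at `b`. -/
lemma far_cw (a b' b c : EuclideanSpace ℝ (Fin 2)) (hne : b' ≠ b)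
    (h1 : ori a b c < 0) (h2 : b' = a ∨ (ori a b' b < 0 ∧ ori b' b c < 0))
    (h : dotAt a b c ≤ 0) : dist b c < dist b' c := by
  apply far_of_dot _ _ _ hne
  rcases h2 with rfl | ⟨h2, h3⟩
  · exact h
  · have := dot_key a b' b c
    by_contra hc
    push Not at hc
    have e1 := mul_nonneg_of_nonpos_of_nonpos h h3.le
    have e2 : ((c 0 - b 0)^2 + (c 1 - b 1)^2) * ori a b' b ≤ 0 :=
      mul_nonpos_of_nonneg_of_nonpos (by positivity) h2.le
    have e3 := mul_neg_of_pos_of_neg hc h1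
    linarith

/-- Counterclockwise version. -/
lemma far_ccw (a b' b c : EuclideanSpace ℝ (Fin 2)) (hne : b' ≠ b)
    (h1 : ori c b a < 0) (h2 : b' = a ∨ (ori b b' a < 0 ∧ ori c b b' < 0))
    (h : dotAt a b c ≤ 0) : dist b c < dist b' c := by
  apply far_of_dot _ _ _ hne
  rcases h2 with rfl | ⟨h2, h3⟩
  · exact h
  · have := dot_key a b' b c
    by_contra hc
    push Not at hc
    rw [ori_swap] at h1 h2 h3
    have e1 := mul_nonpos_of_nonpos_of_nonneg h (neg_neg_iff_pos.1 h3).le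
    have e2 : 0 ≤ ((c 0 - b 0)^2 + (c 1 - b 1)^2) * ori a b' b :=
      mul_nonneg (by positivity) (neg_neg_iff_pos.1 h2).le
    have e3 := mul_pos hc (neg_neg_iff_pos.1 h1)
    linarith

/-- Two consecutive acute angles. -/
lemma two_acute (a b c e : EuclideanSpace ℝ (Fin 2)) (h1 : ori a b c < 0) (h2 : ori b c e < 0)
    (h3 : 0 < dotAt a b c) (h4 : 0 < dotAt b c e) :
    0 < (b 0 - a 0) * (e 1 - c 1) - (b 1 - a 1) * (e 0 - c 0) := by
  have key : ((b 0 - a 0) * (e 1 - c 1) - (b 1 - a 1) * (e 0 - c 0)) *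
      ((c 0 - b 0)^2 + (c 1 - b 1)^2) = - (ori a b c * dotAt b c e) - dotAt a b c * ori b c e := by
    simp only [ori_eq, dotAt]; ring
  have e1 := mul_neg_of_neg_of_pos h1 h4
  have e2 := mul_neg_of_pos_of_neg h3 h2
  by_contra hc
  push Not at hc
  have := mul_nonpos_of_nonpos_of_nonneg hc
    (by positivity : 0 ≤ (c 0 - b 0)^2 + (c 1 - b 1)^2)
  linarith

lemma exists_obtuse (a b c e : EuclideanSpace ℝ (Fin 2)) (h1 : ori a b c < 0)
    (h2 : ori b c e < 0) (h3 : ori c e a < 0) (h4 : ori e a b < 0) :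
    dotAt a b c ≤ 0 ∨ dotAt b c e ≤ 0 ∨ dotAt c e a ≤ 0 ∨ dotAt e a b ≤ 0 := by
  by_contra hc
  push Not at hc
  obtain ⟨k1, k2, k3, k4⟩ := hc
  have := two_acute a b c e h1 h2 k1 k2
  have := two_acute c e a b h3 h4 k3 k4
  linarith

lemma main_aux {n : ℕ} (P : Fin n → EuclideanSpace ℝ (Fin 2))
    (hP : ∀ i j k : Fin n, i < j → j < k → ori (P i) (P j) (P k) < 0)
    (hinj : ∀ u v : Fin n, u < v → P u ≠ P v)
    (d : ℕ → ℝ) (N : ℕ) (hanti : StrictAntiOn d (Set.Icc 1 N))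
    (himg : d '' Set.Icc 1 N = {r : ℝ | ∃ u v : Fin n, u ≠ v ∧ dist (P u) (P v) = r}) :
    ∀ (m i j : ℕ), i + j = m → i ∈ Set.Icc 1 N → j ∈ Set.Icc 1 N →
    ∀ s x y t : Fin n, s < x → x < y → y < t →
    d i ≤ dist (P x) (P y) → d j ≤ dist (P s) (P t) →
    i + j + s.val ≤ x.val + 1 → i + j + y.val ≤ t.val + 1 → False := by
  have step : ∀ i ∈ Set.Icc 1 N, ∀ u v : Fin n, u ≠ v → d i < dist (P u) (P v) →
      ∃ k ∈ Set.Icc 1 N, k < i ∧ d k ≤ dist (P u) (P v) := by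
    intro i hi u v huv hlt
    have : dist (P u) (P v) ∈ d '' Set.Icc 1 N := by rw [himg]; exact ⟨u, v, huv, rfl⟩
    obtain ⟨k, hk, hke⟩ := this
    refine ⟨k, hk, ?_, hke.le⟩
    rw [← hke] at hlt
    exact (hanti.lt_iff_gt hi hk).1 hlt
  intro m
  induction m using Nat.strong_induction_on with
  | _ m ih =>
  intro i j hm hi hj s x y t hsx hxy hyt hbc had h1 h2
  have hi1 := hi.1
  have hj1 := hj.1
  have o1 := hP s x y hsx hxy
  have o2 := hP x y t hxy hyt
  have o3 := hP s y t (hsx.trans hxy) hyt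
  have o4 := hP s x t hsx (hxy.trans hyt)
  have hsx' : s.val < x.val := hsx
  have hxy' : x.val < y.val := hxy
  have hyt' : y.val < t.val := hyt
  have ht := t.isLt
  rcases exists_obtuse (P s) (P x) (P y) (P t) o1 o2 (by rw [ori_rot]; exact o3)
    (by rw [← ori_rot]; exact o4) with h | h | h | h
  · -- move x down
    obtain ⟨w, hw⟩ : ∃ w : Fin n, w.val + 1 = x.val := ⟨⟨x.val - 1, by omega⟩, by simp; omega⟩
    have hwx : w < x := by rw [Fin.lt_def]; omega
    have hwy : w < y := hwx.trans hxy
    have hd := far_cw (P s) (P w) (P x) (P y) (hinj _ _ hwx) o1 (by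
      rcases (show s ≤ w by rw [Fin.le_def]; omega).eq_or_lt with rfl | hlt
      · exact Or.inl rfl
      · exact Or.inr ⟨hP _ _ _ hlt hwx, hP _ _ _ hwx hxy⟩) h
    obtain ⟨k, hk, hki, hkd⟩ := step i hi w y hwy.ne (hbc.trans_lt hd)
    have hk1 := hk.1
    exact ih (k + j) (by omega) k j rfl hk hj s w y t (by rw [Fin.lt_def]; omega) hwy hyt hkd had
      (by omega) (by omega)
  · -- move y up
    obtain ⟨w, hw⟩ : ∃ w : Fin n, w.val = y.val + 1 := ⟨⟨y.val + 1, by omega⟩, rfl⟩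
    have hyw : y < w := by rw [Fin.lt_def]; omega
    have hxw : x < w := hxy.trans hyw
    have hd := far_ccw (P t) (P w) (P y) (P x) (hinj _ _ hyw).symm o2 (by
      rcases (show w ≤ t by rw [Fin.le_def]; omega).eq_or_lt with rfl | hlt
      · exact Or.inl rfl
      · exact Or.inr ⟨hP _ _ _ hyw hlt, hP _ _ _ hxy hyw⟩) (by
        unfold dotAt at h ⊢; linarith)
    rw [dist_comm, dist_comm (P w)] at hd
    obtain ⟨k, hk, hki, hkd⟩ := step i hi x w hxw.ne (hbc.trans_lt hd)
    have hk1 := hk.1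
    exact ih (k + j) (by omega) k j rfl hk hj s x w t hsx hxw (by rw [Fin.lt_def]; omega) hkd had
      (by omega) (by omega)
  · -- move t down
    obtain ⟨w, hw⟩ : ∃ w : Fin n, w.val + 1 = t.val := ⟨⟨t.val - 1, by omega⟩, by simp; omega⟩
    have hwt : w < t := by rw [Fin.lt_def]; omega
    have hsw : s < w := by rw [Fin.lt_def]; omega
    have hd := far_cw (P y) (P w) (P t) (P s) (hinj _ _ hwt) (by rw [ori_rot]; exact o3) (by
      rcases (show y ≤ w by rw [Fin.le_def]; omega).eq_or_lt with rfl | hlt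
      · exact Or.inl rfl
      · exact Or.inr ⟨hP _ _ _ hlt hwt, by rw [ori_rot]; exact hP _ _ _ hsw hwt⟩) h
    rw [dist_comm, dist_comm (P w)] at hd
    obtain ⟨k, hk, hki, hkd⟩ := step j hj s w hsw.ne (had.trans_lt hd)
    have hk1 := hk.1
    exact ih (i + k) (by omega) i k rfl hi hk s x y w hsx hxy (by rw [Fin.lt_def]; omega) hbc hkd
      (by omega) (by omega)
  · -- move s up
    obtain ⟨w, hw⟩ : ∃ w : Fin n, w.val = s.val + 1 := ⟨⟨s.val + 1, by omega⟩, rfl⟩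
    have hsw : s < w := by rw [Fin.lt_def]; omega
    have hwt : w < t := by rw [Fin.lt_def]; omega
    have hd := far_ccw (P x) (P w) (P s) (P t) (hinj _ _ hsw).symm
      (by rw [← ori_rot]; exact o4) (by
      rcases (show w ≤ x by rw [Fin.le_def]; omega).eq_or_lt with rfl | hlt
      · exact Or.inl rfl
      · exact Or.inr ⟨hP _ _ _ hsw hlt, by rw [← ori_rot]; exact hP _ _ _ hsw hwt⟩) (by
        unfold dotAt at h ⊢; linarith)
    obtain ⟨k, hk, hki, hkd⟩ := step j hj w t hwt.ne (had.trans_lt hd)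
    have hk1 := hk.1
    exact ih (i + k) (by omega) i k rfl hi hk w x y t (by rw [Fin.lt_def]; omega) hxy hyt hbc hkd
      (by omega) (by omega)

/-- Fact 3: `d 1 > d 2 > ⋯ > d N` enumerates the distinct pairwise distances of the
convex polygon `P`. With `a = P 0, b = P x, c = P y, d = P z` in clockwise order,
if `dist b c ≥ d i` and `dist a d ≥ d j`, then either between `a` and `b` or between
`c` and `d` there are at most `i + j - 3` other vertices (as an inequality over ℤ). -/
theorem stmt7 {n : ℕ} [NeZero n] (P : Fin n → EuclideanSpace ℝ (Fin 2))
    (hP : ClockwiseConvexPos P)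
    (d : ℕ → ℝ) (N : ℕ) (hanti : StrictAntiOn d (Set.Icc 1 N))
    (himg : d '' Set.Icc 1 N = {r : ℝ | ∃ u v : Fin n, u ≠ v ∧ dist (P u) (P v) = r})
    (i j : ℕ) (hi : i ∈ Set.Icc 1 N) (hj : j ∈ Set.Icc 1 N)
    (x y z : Fin n) (hx : 0 < x) (hxy : x ≤ y) (hyz : y < z)
    (hbc : d i ≤ dist (P x) (P y)) (had : d j ≤ dist (P 0) (P z)) :
    min ((x.val : ℤ) - 1) ((z.val : ℤ) - y.val - 1) ≤ (i : ℤ) + j - 3 := by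
  have hP' : ∀ i j k : Fin n, i < j → j < k → ori (P i) (P j) (P k) < 0 := hP
  have h0x : 0 < x.val := by have h := Fin.lt_def.1 hx; omega
  have hxy' : x.val ≤ y.val := hxy
  have hyz' : y.val < z.val := hyz
  have hz := z.isLt
  have hinj : ∀ u v : Fin n, u < v → P u ≠ P v := by
    intro u v huv he
    have huv' : u.val < v.val := huv
    have hv := v.isLt
    by_cases c1 : 0 < u.val
    · have := hP' ⟨0, by omega⟩ u v c1 huv
      rw [he, ori_eq] at this
      linarith
    · by_cases c2 : v.val + 1 < n
      · have := hP' u v ⟨v.val + 1, c2⟩ huv (by simp [Fin.lt_def])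
        rw [he, ori_eq] at this
        linarith
      · have := hP' u ⟨1, by omega⟩ v (by simp only [Fin.lt_def]; omega)
          (by simp only [Fin.lt_def]; omega)
        rw [he, ori_eq] at this
        linarith
  have hxy2 : x < y := by
    refine lt_of_le_of_ne hxy ?_
    rintro rfl
    have hm : d i ∈ d '' Set.Icc 1 N := ⟨i, hi, rfl⟩
    rw [himg] at hm
    obtain ⟨u, v, huv, he⟩ := hm
    have hpos : 0 < dist (P u) (P v) := by
      rw [dist_pos]
      rcases lt_or_gt_of_ne huv with h | h
      · exact hinj _ _ h
      · exact (hinj _ _ h).symm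
    rw [dist_self] at hbc
    linarith
  by_contra hc
  push Not at hc
  rw [lt_min_iff] at hc
  have hz0 : ((0 : Fin n) : ℕ) = 0 := by simp
  exact main_aux P hP' hinj d N hanti himg (i + j) i j rfl hi hj 0 x y z hx hxy2 hyz hbc had
    (by omega) (by omega)
end

section
/- Let a₁, …, aₙ be vertices of a convex polygon in clockwise order and let d_k be the k-th largest pairwise distance. For a fixed residue r mod n, consider the 'level' L_r consisting of all diagonals a_j a_m with j + m ≡ r (mod n). Then at most 2k − 1 diagonals in L_r have length ≥ d_k. -/
/-- The planar inner product in coordinates. -/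
noncomputable def ip2 (u v : EuclideanSpace ℝ (Fin 2)) : ℝ := u 0 * v 0 + u 1 * v 1

lemma dist_lt_of_ip {b c c' : EuclideanSpace ℝ (Fin 2)} (hne : c' ≠ c)
    (h : ip2 (b - c) (c' - c) ≤ 0) : dist b c < dist b c' := by
  rw [EuclideanSpace.dist_eq, EuclideanSpace.dist_eq]
  apply Real.sqrt_lt_sqrt (by positivity)
  simp only [Fin.sum_univ_two, Real.dist_eq, sq_abs]
  simp only [ip2, PiLp.sub_apply] at h
  have hpos : 0 < (c' 0 - c 0)^2 + (c' 1 - c 1)^2 := by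
    by_contra hcon
    apply hne
    have h0 : (c' 0 - c 0)^2 = 0 := by nlinarith [sq_nonneg (c' 0 - c 0), sq_nonneg (c' 1 - c 1)]
    have h1 : (c' 1 - c 1)^2 = 0 := by nlinarith [sq_nonneg (c' 0 - c 0), sq_nonneg (c' 1 - c 1)]
    have h0' := pow_eq_zero_iff (two_ne_zero) |>.1 h0
    have h1' := pow_eq_zero_iff (two_ne_zero) |>.1 h1
    ext i
    fin_cases i
    · simpa using by linarith
    · simpa using by linarith
  nlinarith

lemma ip_neg_of_between {u v w : EuclideanSpace ℝ (Fin 2)}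
    (h1 : cross2 w v < 0) (h2 : cross2 v u < 0) (h3 : cross2 w u < 0)
    (h : ip2 u v ≤ 0) : ip2 u w ≤ 0 := by
  have key : cross2 w u * ip2 u v = cross2 v u * ip2 u w + cross2 w v * ip2 u u := by
    simp only [cross2, ip2]; ring
  have huu : 0 ≤ ip2 u u := by
    simp only [ip2]; nlinarith [sq_nonneg (u 0), sq_nonneg (u 1)]
  by_contra hc
  push Not at hc
  nlinarith [mul_nonneg_of_nonpos_of_nonpos h3.le h, mul_neg_of_neg_of_pos h2 hc,
    mul_nonpos_of_nonpos_of_nonneg h1.le huu]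

lemma ip_neg_of_between' {u v w : EuclideanSpace ℝ (Fin 2)}
    (h1 : 0 < cross2 w v) (h2 : 0 < cross2 v u) (h3 : 0 < cross2 w u)
    (h : ip2 u v ≤ 0) : ip2 u w ≤ 0 := by
  have key : cross2 w u * ip2 u v = cross2 v u * ip2 u w + cross2 w v * ip2 u u := by
    simp only [cross2, ip2]; ring
  have huu : 0 ≤ ip2 u u := by
    simp only [ip2]; nlinarith [sq_nonneg (u 0), sq_nonneg (u 1)]
  by_contra hc
  push Not at hc
  nlinarith [mul_nonpos_of_nonneg_of_nonpos h3.le h, mul_pos h2 hc, mul_nonneg h1.le huu]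

lemma cross_pos_of_acute {x y z : EuclideanSpace ℝ (Fin 2)}
    (h1 : cross2 x y < 0) (h2 : cross2 y z < 0) (h3 : ip2 x y < 0) (h4 : ip2 y z < 0) :
    0 < cross2 x z := by
  have key : cross2 x z * ip2 y y = cross2 x y * ip2 y z + ip2 x y * cross2 y z := by
    simp only [cross2, ip2]; ring
  have huu : 0 ≤ ip2 y y := by
    simp only [ip2]; nlinarith [sq_nonneg (y 0), sq_nonneg (y 1)]
  by_contra hc
  push Not at hc
  nlinarith [mul_pos_of_neg_of_neg h1 h4, mul_pos_of_neg_of_neg h3 h2,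
    mul_nonpos_of_nonpos_of_nonneg hc huu]

/-- A convex quadrilateral has a non-acute angle. -/
lemma exists_nonacute {a b c d : EuclideanSpace ℝ (Fin 2)}
    (hb : cross2 (b - a) (c - a) < 0) (hc : cross2 (c - b) (d - b) < 0)
    (hd : cross2 (c - a) (d - a) < 0) (ha : cross2 (b - a) (d - a) < 0) :
    ip2 (d - a) (b - a) ≤ 0 ∨ ip2 (c - b) (a - b) ≤ 0 ∨ ip2 (b - c) (d - c) ≤ 0 ∨
      ip2 (a - d) (c - d) ≤ 0 := by
  by_contra! hcon
  obtain ⟨k1, k2, k3, k4⟩ := hcon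
  have p1 : 0 < cross2 (b - a) (d - c) := by
    apply cross_pos_of_acute (y := c - b)
    all_goals simp only [cross2, ip2, PiLp.sub_apply] at *
    all_goals linarith
  have p2 : 0 < cross2 (d - c) (b - a) := by
    apply cross_pos_of_acute (y := a - d)
    all_goals simp only [cross2, ip2, PiLp.sub_apply] at *
    all_goals linarith
  simp only [cross2] at p1 p2
  linarith

section
variable {n : ℤ} {Q : ℤ → EuclideanSpace ℝ (Fin 2)}

lemma farR (H : ∀ x y z : ℤ, x < y → y < z → z < x + n → cross2 (Q y - Q x) (Q z - Q x) < 0)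
    {b c d : ℤ} (h1 : c < d) (h2 : d < b) (h3 : b < c + n)
    (h : ip2 (Q b - Q c) (Q d - Q c) ≤ 0) : dist (Q b) (Q c) < dist (Q b) (Q (c+1)) := by
  have hx := H c (c+1) b (by omega) (by omega) (by omega)
  apply dist_lt_of_ip
  · intro he
    rw [he] at hx
    simp [cross2] at hx
  · rcases eq_or_ne (c+1) d with e | e
    · rw [e]; exact h
    · exact ip_neg_of_between (H c (c+1) d (by omega) (by omega) (by omega))
        (H c d b (by omega) (by omega) (by omega)) hx h

lemma cross_rot (a b c : EuclideanSpace ℝ (Fin 2)) :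
    cross2 (a - c) (b - c) = cross2 (b - a) (c - a) := by
  simp only [cross2, PiLp.sub_apply]; ring

lemma cross_flip (a b c : EuclideanSpace ℝ (Fin 2)) :
    cross2 (a - b) (c - b) = - cross2 (b - a) (c - a) := by
  simp only [cross2, PiLp.sub_apply]; ring

lemma farL (H : ∀ x y z : ℤ, x < y → y < z → z < x + n → cross2 (Q y - Q x) (Q z - Q x) < 0)
    {a b c : ℤ} (h1 : a < b) (h2 : b < c) (h3 : c < a + n)
    (h : ip2 (Q c - Q b) (Q a - Q b) ≤ 0) : dist (Q c) (Q b) < dist (Q c) (Q (b-1)) := by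
  have hx := H (b-1) b c (by omega) (by omega) (by omega)
  apply dist_lt_of_ip
  · intro he
    rw [he] at hx
    simp [cross2] at hx
  · rcases eq_or_ne (b-1) a with e | e
    · rw [e]; exact h
    · have q1 := H a (b-1) b (by omega) (by omega) (by omega)
      have q2 := H a b c (by omega) (by omega) (by omega)
      refine ip_neg_of_between' ?_ ?_ ?_ h
      all_goals simp only [cross2, PiLp.sub_apply] at *
      all_goals linarith

lemma fact3 (H : ∀ x y z : ℤ, x < y → y < z → z < x + n → cross2 (Q y - Q x) (Q z - Q x) < 0)
    (hper : ∀ x, Q (x + n) = Q x)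
    {d : ℕ → ℝ} {N : ℕ} (hanti : StrictAntiOn d (Set.Icc 1 N))
    (hD : ∀ x y : ℤ, x < y → y < x + n → ∃ i ∈ Set.Icc 1 N, d i = dist (Q x) (Q y)) (s : ℕ) :
    ∀ (i j : ℕ), i + j = s → i ∈ Set.Icc 1 N → j ∈ Set.Icc 1 N →
    ∀ a b c e : ℤ, a + s ≤ b + 1 → b < c → c + s ≤ e + 1 → e < a + n →
      d i ≤ dist (Q b) (Q c) → d j ≤ dist (Q a) (Q e) → False := by
  have imp : ∀ (i : ℕ) (x y : ℤ) (t : ℝ), i ∈ Set.Icc 1 N → x < y → y < x + n → d i ≤ t →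
      t < dist (Q x) (Q y) → ∃ i' ∈ Set.Icc 1 N, i' + 1 ≤ i ∧ d (i - 1) ≤ dist (Q x) (Q y) ∧
        i - 1 ∈ Set.Icc 1 N := by
    intro i x y t hi h1 h2 h3 h4
    obtain ⟨i', hi', e⟩ := hD x y h1 h2
    have hlt : i' < i := by
      by_contra hc
      push Not at hc
      have := (hanti.antitoneOn) hi hi' hc
      linarith
    have hm : i - 1 ∈ Set.Icc 1 N := by
      simp only [Set.mem_Icc] at *; omega
    refine ⟨i', hi', hlt, ?_, hm⟩
    rw [← e]
    exact hanti.antitoneOn hi' hm (by omega)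
  induction s with
  | zero => intro i j hs hi hj; simp only [Set.mem_Icc] at *; omega
  | succ s ih =>
    intro i j hs hi hj a b c e hab hbc hce hea hdi hdj
    have hi1 : 1 ≤ i := hi.1
    have hj1 : 1 ≤ j := hj.1
    push_cast at hab hce
    rcases exists_nonacute (H a b c (by omega) (by omega) (by omega))
      (H b c e (by omega) (by omega) (by omega)) (H a c e (by omega) (by omega) (by omega))
      (H a b e (by omega) (by omega) (by omega)) with h | h | h | h
    · have := farR H (by omega) (by omega) (by omega) h
      rw [dist_comm (Q e), dist_comm (Q e)] at this
      obtain ⟨_, _, _, h5, h6⟩ := imp j (a+1) e _ hj (by omega) (by omega) hdj this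
      exact ih i (j-1) (by omega) hi h6 (a+1) b c e (by omega) (by omega) (by omega) (by omega)
        hdi h5
    · have := farL H (by omega) (by omega) (by omega) h
      rw [dist_comm (Q c), dist_comm (Q c)] at this
      obtain ⟨_, _, _, h5, h6⟩ := imp i (b-1) c _ hi (by omega) (by omega) hdi this
      exact ih (i-1) j (by omega) h6 hj a (b-1) c e (by omega) (by omega) (by omega) (by omega)
        h5 hdj
    · rw [← hper b] at h
      have := farR H (by omega) (by omega) (by omega) h
      rw [hper] at this
      obtain ⟨_, _, _, h5, h6⟩ := imp i b (c+1) _ hi (by omega) (by omega) hdi this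
      exact ih (i-1) j (by omega) h6 hj a b (c+1) e (by omega) (by omega) (by omega) (by omega)
        h5 hdj
    · rw [← hper a] at h
      have := farL H (by omega) (by omega) (by omega) h
      rw [hper] at this
      obtain ⟨_, _, _, h5, h6⟩ := imp j a (e-1) _ hj (by omega) (by omega) hdj this
      exact ih i (j-1) (by omega) hi h6 a b c (e-1) (by omega) (by omega) (by omega) (by omega)
        hdi h5
end

/-- In any level `L_r` (diagonals `a_j a_m` with `j + m ≡ r (mod n)`), at most `2k - 1`
diagonals have length at least `d_k`, the `k`-th largest pairwise distance. -/
theorem stmt8 {n : ℕ} (P : Fin n → EuclideanSpace ℝ (Fin 2)) (hP : ClockwiseConvexPos P)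
    (d : ℕ → ℝ) (N : ℕ) (hanti : StrictAntiOn d (Set.Icc 1 N))
    (himg : d '' Set.Icc 1 N = {r : ℝ | ∃ u v : Fin n, u ≠ v ∧ dist (P u) (P v) = r})
    (k : ℕ) (hk : k ∈ Set.Icc 1 N) (r : ℕ) :
    ((Finset.univ : Finset (Fin n × Fin n)).filter
      (fun p => p.1 < p.2 ∧ (p.1.val + p.2.val) % n = r ∧ d k ≤ dist (P p.1) (P p.2))).card
      ≤ 2 * k - 1 := by
  rcases Nat.eq_zero_or_pos n with hn | hn
  · subst hn; simp
  have hn' : (0 : ℤ) < n := by exact_mod_cast hn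
  have hmod : ∀ x : ℤ, (x % n).toNat < n := fun x => by
    have := Int.emod_nonneg x hn'.ne'
    have := Int.emod_lt_of_pos x hn'
    omega
  obtain ⟨Q, hQ⟩ : ∃ Q : ℤ → EuclideanSpace ℝ (Fin 2), Q = fun x : ℤ => P ⟨(x % (n : ℤ)).toNat, hmod x⟩ :=
    ⟨_, rfl⟩
  have hper : ∀ x, Q (x + n) = Q x := fun x => by simp [hQ]
  have hQv : ∀ u : Fin n, Q (u.val : ℤ) = P u := fun u => by
    have : ((u.val : ℤ) % n) = u.val :=
      Int.emod_eq_of_lt (by omega) (by exact_mod_cast u.isLt)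
    simp [hQ, this]
  have hperm : ∀ (x m : ℤ), Q (x + n * m) = Q x := fun x m => by simp [hQ]
  -- every integer is congruent to one in `[0, n)`
  have H0 : ∀ x y z : ℤ, 0 ≤ x → x < y → y < z → z < n →
      cross2 (Q y - Q x) (Q z - Q x) < 0 := by
    intro x y z h0 h1 h2 h3
    have := hP ⟨x.toNat, by omega⟩ ⟨y.toNat, by omega⟩ ⟨z.toNat, by omega⟩
      (by simp only [Fin.mk_lt_mk]; omega) (by simp only [Fin.mk_lt_mk]; omega)
    rw [← hQv, ← hQv, ← hQv] at this
    simpa [Int.toNat_of_nonneg h0, Int.toNat_of_nonneg (show 0 ≤ y by omega),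
      Int.toNat_of_nonneg (show 0 ≤ z by omega)] using this
  have H1 : ∀ x y z : ℤ, 0 ≤ x → x < n → x < y → y < z → z < x + n →
      cross2 (Q y - Q x) (Q z - Q x) < 0 := by
    intro x y z h0 h0' h1 h2 h3
    rcases lt_or_ge z n with hz | hz
    · exact H0 x y z h0 h1 h2 hz
    · have ez : Q z = Q (z - n) := by rw [← hper (z - n)]; congr 1; ring
      rcases lt_or_ge y n with hy | hy
      · have := H0 (z - n) x y (by omega) (by omega) (by omega) (by omega)
        rw [ez, ← cross_rot, ← cross_rot, ← cross_rot]
        rwa [← cross_rot, ← cross_rot]  at this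
      · have ey : Q y = Q (y - n) := by rw [← hper (y - n)]; congr 1; ring
        have := H0 (y - n) (z - n) x (by omega) (by omega) (by omega) (by omega)
        rw [ez, ey]
        rwa [← cross_rot] at this
  have H : ∀ x y z : ℤ, x < y → y < z → z < x + n → cross2 (Q y - Q x) (Q z - Q x) < 0 := by
    intro x y z h1 h2 h3
    have e := Int.emod_add_mul_ediv x n
    have := H1 (x % n) (y - n * (x / n)) (z - n * (x / n)) (Int.emod_nonneg x hn'.ne')
      (Int.emod_lt_of_pos x hn') (by linarith) (by linarith) (by linarith)
    rw [← hperm (x % n) (x / n), ← hperm (y - _) (x / n), ← hperm (z - _) (x / n)] at this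
    simpa [e] using this
  have hD : ∀ x y : ℤ, x < y → y < x + n → ∃ i ∈ Set.Icc 1 N, d i = dist (Q x) (Q y) := by
    intro x y h1 h2
    have : dist (Q x) (Q y) ∈ d '' Set.Icc 1 N := by
      rw [himg]
      refine ⟨⟨(x % n).toNat, hmod x⟩, ⟨(y % n).toNat, hmod y⟩, ?_, by simp [hQ]⟩
      intro he
      simp only [Fin.mk.injEq] at he
      have := Int.emod_nonneg x hn'.ne'
      have := Int.emod_nonneg y hn'.ne'
      have he' : x % n = y % n := by omega
      have hdv := (Int.emod_emod_of_dvd y (dvd_refl (n:ℤ)))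
      have : (n : ℤ) ∣ y - x := Int.ModEq.dvd he'
      have := Int.le_of_dvd (by omega) this
      omega
    exact this
  by_contra hcon
  push Not at hcon
  set F := ((Finset.univ : Finset (Fin n × Fin n)).filter
      (fun p => p.1 < p.2 ∧ (p.1.val + p.2.val) % n = r ∧ d k ≤ dist (P p.1) (P p.2))) with hF
  let f : Fin n × Fin n → ℤ := fun p =>
    if p.1.val + p.2.val < n then (p.1.val : ℤ) else (p.2.val : ℤ) - n
  have hk1 : 1 ≤ k := hk.1
  have hsum : ∀ p ∈ F, p.1.val < p.2.val ∧ ((p.1.val + p.2.val < n ∧ p.1.val + p.2.val = r) ∨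
      (¬ p.1.val + p.2.val < n ∧ p.1.val + p.2.val = r + n)) := by
    intro p hp
    simp only [hF, Finset.mem_filter, Finset.mem_univ, true_and] at hp
    obtain ⟨h1, h2, _⟩ := hp
    refine ⟨h1, ?_⟩
    have := p.1.isLt
    have := p.2.isLt
    by_cases hl : p.1.val + p.2.val < n
    · rw [Nat.mod_eq_of_lt hl] at h2; exact Or.inl ⟨hl, h2⟩
    · rw [Nat.mod_eq_sub_mod (by omega), Nat.mod_eq_of_lt (by omega)] at h2
      exact Or.inr ⟨hl, by omega⟩
  have hinj : Set.InjOn f F := by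
    intro p hp q hq h
    have hp' := hsum p hp
    have hq' := hsum q hq
    have := p.1.isLt
    have := p.2.isLt
    have := q.1.isLt
    have := q.2.isLt
    simp only [f] at h
    refine Prod.ext (Fin.ext ?_) (Fin.ext ?_) <;> split_ifs at h <;> omega
  have hS : ∀ x ∈ F.image f, x < r - x ∧ r - x < x + n ∧ d k ≤ dist (Q x) (Q (r - x)) := by
    intro x hx
    obtain ⟨p, hp, rfl⟩ := Finset.mem_image.1 hx
    have hp' := hsum p hp
    have := p.1.isLt
    have := p.2.isLt
    simp only [hF, Finset.mem_filter, Finset.mem_univ, true_and] at hp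
    obtain ⟨_, _, hd⟩ := hp
    simp only [f]
    split_ifs with hl
    · refine ⟨by omega, by omega, ?_⟩
      rw [show (r : ℤ) - p.1.val = (p.2.val : ℤ) by omega, hQv, hQv]
      exact hd
    · refine ⟨by omega, by omega, ?_⟩
      rw [show (r : ℤ) - (p.2.val - n) = (p.1.val : ℤ) by omega,
        ← hper, show (p.2.val : ℤ) - n + n = p.2.val by ring, hQv, hQv, dist_comm]
      exact hd
  have hcard : (F.image f).card = F.card := Finset.card_image_of_injOn hinj
  have hne : (F.image f).Nonempty := by
    rw [← Finset.card_pos]; omega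
  have hsub : F.image f ⊆ Finset.Icc ((F.image f).min' hne) ((F.image f).max' hne) := by
    intro x hx
    exact Finset.mem_Icc.2 ⟨Finset.min'_le _ _ hx, Finset.le_max' _ _ hx⟩
  have hc := Finset.card_le_card hsub
  rw [Int.card_Icc] at hc
  obtain ⟨a1, a2, a3⟩ := hS _ (Finset.min'_mem _ hne)
  obtain ⟨b1, b2, b3⟩ := hS _ (Finset.max'_mem _ hne)
  exact fact3 H hper hanti hD (k + k) k k rfl hk hk _ _ _ _ (by push_cast; omega) b1
    (by push_cast; omega) a2 b3 a3
end

section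
/- Let a₁, …, aₙ be vertices of a convex polygon, d₁ > d₂ > ⋯ its decreasing list of distinct pairwise distances, and m_i the number of unordered vertex pairs at distance d_i. Then for every k ≥ 1, m₁ + m₂ + ⋯ + m_k ≤ (2k − 1)·n. -/
/-- If `|w - u| ≤ |w|` and `U` lies in the angular sector between `u` and `w`, then `U` makes an
acute angle with `w`. -/
lemma acute_aux (u0 u1 U0 U1 w0 w1 : ℝ) (h1 : u0 * w1 - u1 * w0 < 0)
    (h2 : U0 * w1 - U1 * w0 < 0) (h3 : u0 * U1 - u1 * U0 ≤ 0)
    (h4 : (w0 - u0) ^ 2 + (w1 - u1) ^ 2 ≤ w0 ^ 2 + w1 ^ 2) : 0 < U0 * w0 + U1 * w1 := by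
  have hu : 0 < u0 ^ 2 + u1 ^ 2 := by
    by_contra hc
    have a0 : u0 = 0 := by nlinarith [sq_nonneg u0, sq_nonneg u1]
    have a1 : u1 = 0 := by nlinarith [sq_nonneg u0, sq_nonneg u1]
    subst a0 a1
    simp at h1
  have hi : 0 < u0 * w0 + u1 * w1 := by nlinarith
  have key : (U0 * w0 + U1 * w1) * (-(u0 * w1 - u1 * w0))
      = (-(U0 * w1 - U1 * w0)) * (u0 * w0 + u1 * w1)
        + (-(u0 * U1 - u1 * U0)) * (w0 ^ 2 + w1 ^ 2) := by ring
  have p1 : 0 < (-(U0 * w1 - U1 * w0)) * (u0 * w0 + u1 * w1) := mul_pos (by linarith) hi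
  have p2 : 0 ≤ (-(u0 * U1 - u1 * U0)) * (w0 ^ 2 + w1 ^ 2) :=
    mul_nonneg (by linarith) (by positivity)
  have : 0 < (U0 * w0 + U1 * w1) * (-(u0 * w1 - u1 * w0)) := by rw [key]; linarith
  exact pos_of_mul_pos_left this (by linarith)

lemma cross_aux (U0 U1 V0 V1 w0 w1 : ℝ) (h1 : 0 < w0 * U0 + w1 * U1) (h2 : w0 * V0 + w1 * V1 < 0)
    (h3 : 0 < w0 * U1 - w1 * U0) (h4 : 0 < w0 * V1 - w1 * V0) : 0 < U0 * V1 - U1 * V0 := by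
  have key : (U0 * V1 - U1 * V0) * (w0 ^ 2 + w1 ^ 2)
      = (w0 * U0 + w1 * U1) * (w0 * V1 - w1 * V0)
        + (w0 * U1 - w1 * U0) * (-(w0 * V0 + w1 * V1)) := by ring
  have p1 := mul_pos h1 h4
  have p2 := mul_pos h3 (neg_pos.2 h2)
  exact pos_of_mul_pos_left (b := w0 ^ 2 + w1 ^ 2) (by rw [key]; linarith) (by positivity)

lemma dist_le_aux (A B C D : EuclideanSpace ℝ (Fin 2)) (h : dist A B ≤ dist C D) :
    (A 0 - B 0) ^ 2 + (A 1 - B 1) ^ 2 ≤ (C 0 - D 0) ^ 2 + (C 1 - D 1) ^ 2 := by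
  rw [EuclideanSpace.dist_eq, EuclideanSpace.dist_eq] at h
  have := (Real.sqrt_le_sqrt_iff (by positivity)).1 h
  simpa [Fin.sum_univ_two, Real.dist_eq, sq_abs] using this

/-- Cross product orientation is cyclic. -/
lemma cross2_cyc (A B C : EuclideanSpace ℝ (Fin 2)) :
    cross2 (B - A) (C - A) = cross2 (C - B) (A - B) := by
  simp [cross2]; ring

lemma acute_fwd (A B D H : EuclideanSpace ℝ (Fin 2)) (h1 : cross2 (B - A) (H - A) < 0)
    (h2 : cross2 (D - A) (H - A) < 0) (h3 : cross2 (B - A) (D - A) ≤ 0)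
    (h4 : dist B H ≤ dist A H) :
    0 < (D 0 - A 0) * (H 0 - A 0) + (D 1 - A 1) * (H 1 - A 1) := by
  have h5 := dist_le_aux _ _ _ _ h4
  simp only [cross2, PiLp.sub_apply] at h1 h2 h3
  exact acute_aux (B 0 - A 0) (B 1 - A 1) _ _ _ _ h1 h2 h3 (by nlinarith)

lemma acute_bwd (A B D H : EuclideanSpace ℝ (Fin 2)) (h1 : 0 < cross2 (B - A) (H - A))
    (h2 : 0 < cross2 (D - A) (H - A)) (h3 : 0 ≤ cross2 (B - A) (D - A))
    (h4 : dist B H ≤ dist A H) :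
    0 < (D 0 - A 0) * (H 0 - A 0) + (D 1 - A 1) * (H 1 - A 1) := by
  have h5 := dist_le_aux _ _ _ _ h4
  simp only [cross2, PiLp.sub_apply] at h1 h2 h3
  have := acute_aux (B 0 - A 0) (-(B 1 - A 1)) (D 0 - A 0) (-(D 1 - A 1)) (H 0 - A 0)
    (-(H 1 - A 1)) (by nlinarith) (by nlinarith) (by nlinarith) (by nlinarith)
  nlinarith

/-- A convex quadrilateral cannot have four acute angles. -/
lemma four_acute (A D E H : EuclideanSpace ℝ (Fin 2))
    (c1 : cross2 (D - A) (H - A) < 0) (c2 : cross2 (E - A) (H - A) < 0)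
    (c3 : cross2 (D - A) (E - A) < 0) (c4 : cross2 (E - D) (H - D) < 0)
    (hA : 0 < (D 0 - A 0) * (H 0 - A 0) + (D 1 - A 1) * (H 1 - A 1))
    (hH : 0 < (E 0 - H 0) * (A 0 - H 0) + (E 1 - H 1) * (A 1 - H 1))
    (hD : 0 < (A 0 - D 0) * (E 0 - D 0) + (A 1 - D 1) * (E 1 - D 1))
    (hE : 0 < (H 0 - E 0) * (D 0 - E 0) + (H 1 - E 1) * (D 1 - E 1)) : False := by
  simp only [cross2, PiLp.sub_apply] at c1 c2 c3 c4
  have k1 := cross_aux (D 0 - A 0) (D 1 - A 1) (E 0 - H 0) (E 1 - H 1) (H 0 - A 0) (H 1 - A 1)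
    (by linarith) (by linarith) (by linarith) (by linarith)
  have k2 := cross_aux (H 0 - E 0) (H 1 - E 1) (A 0 - D 0) (A 1 - D 1) (D 0 - E 0) (D 1 - E 1)
    (by linarith) (by linarith) (by linarith) (by linarith)
  linarith

/-- Periodic extension of the vertex list. -/
noncomputable def perExt {n : ℕ} (hn : 0 < n) (P : Fin n → EuclideanSpace ℝ (Fin 2)) (z : ℤ) :
    EuclideanSpace ℝ (Fin 2) :=
  P ⟨(z % n).toNat, by
    have h1 := Int.emod_nonneg z (b := (n : ℤ)) (by omega)
    have h2 := Int.emod_lt_of_pos z (b := (n : ℤ)) (by omega)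
    omega⟩

lemma perExt_eq {n : ℕ} (hn : 0 < n) (P : Fin n → EuclideanSpace ℝ (Fin 2)) (z : ℤ) (i : Fin n)
    (t : ℤ) (h : z = i + n * t) : perExt hn P z = P i := by
  unfold perExt
  congr 1
  apply Fin.ext
  have : z % n = i := by
    rw [h, Int.add_mul_emod_self_left]
    exact Int.emod_eq_of_lt (by omega) (by have := i.2; omega)
  simp [this]

lemma exists_rep {n : ℕ} (hn : 0 < n) (z : ℤ) : ∃ (i : Fin n) (t : ℤ), z = i + n * t := by
  have h1 := Int.emod_nonneg z (b := (n : ℤ)) (by omega)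
  have h2 := Int.emod_lt_of_pos z (b := (n : ℤ)) (by omega)
  refine ⟨⟨(z % n).toNat, by omega⟩, z / n, ?_⟩
  have := Int.emod_add_mul_ediv z n
  simp only [Int.toNat_of_nonneg h1]
  omega

lemma exists_rep_near {n : ℕ} (hn : 0 < n) (i : Fin n) (t : ℤ) (z : ℤ)
    (h1 : (i : ℤ) + n * t < z) (h2 : z < (i : ℤ) + n * t + n) :
    ∃ j : Fin n, (i < j ∧ z = j + n * t) ∨ (j < i ∧ z = j + n * (t + 1)) := by
  have hi := i.2
  by_cases h : z - n * t < n
  · refine ⟨⟨(z - n * t).toNat, by omega⟩, Or.inl ⟨?_, ?_⟩⟩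
    · rw [Fin.lt_def]; simp only; omega
    · simp only; omega
  · refine ⟨⟨(z - n * t - n).toNat, by omega⟩, Or.inr ⟨?_, ?_⟩⟩
    · rw [Fin.lt_def]; simp only; omega
    · simp only [mul_add, mul_one]; omega

lemma perExt_cross {n : ℕ} (hn : 0 < n) (P : Fin n → EuclideanSpace ℝ (Fin 2))
    (hP : ClockwiseConvexPos P) (x y z : ℤ) (h1 : x < y) (h2 : y < z) (h3 : z < x + n) :
    cross2 (perExt hn P y - perExt hn P x) (perExt hn P z - perExt hn P x) < 0 := by
  obtain ⟨i, t, hi⟩ := exists_rep hn x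
  obtain ⟨j, hj⟩ := exists_rep_near hn i t y (by omega) (by omega)
  obtain ⟨k, hk⟩ := exists_rep_near hn i t z (by omega) (by omega)
  rw [perExt_eq hn P x i t hi]
  rcases hj with ⟨hj, hj'⟩ | ⟨hj, hj'⟩ <;> rcases hk with ⟨hk, hk'⟩ | ⟨hk, hk'⟩ <;>
    rw [perExt_eq hn P y j _ hj', perExt_eq hn P z k _ hk']
  · exact hP i j k hj (by rw [Fin.lt_def]; omega)
  · rw [← cross2_cyc]
    exact hP k i j hk hj
  · exfalso
    rw [mul_add] at hj'
    have := k.2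
    omega
  · rw [cross2_cyc]
    exact hP j k i (by rw [Fin.lt_def]; omega) hk

lemma perExt_dist_mem {n : ℕ} (hn : 0 < n) (P : Fin n → EuclideanSpace ℝ (Fin 2))
    (x y : ℤ) (h1 : x < y) (h2 : y < x + n) :
    ∃ u v : Fin n, u ≠ v ∧ dist (P u) (P v) = dist (perExt hn P x) (perExt hn P y) := by
  obtain ⟨i, t, hi⟩ := exists_rep hn x
  obtain ⟨j, hj⟩ := exists_rep_near hn i t y (by omega) (by omega)
  rcases hj with ⟨hj, hj'⟩ | ⟨hj, hj'⟩
  · exact ⟨i, j, hj.ne, by rw [perExt_eq hn P x i t hi, perExt_eq hn P y j _ hj']⟩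
  · refine ⟨i, j, hj.ne', ?_⟩
    rw [perExt_eq hn P x i t hi, perExt_eq hn P y j _ hj']
    done

/-- Greedy walk: it must get stuck before `k` steps. -/
lemma walk_stuck (d : ℕ → ℝ) (N k : ℕ) (hk2 : k ≤ N) (hanti : StrictAntiOn d (Set.Icc 1 N))
    (f : ℕ → ℕ → ℝ) (hmem : ∀ s t, s + t ≤ k → ∃ i ∈ Set.Icc 1 N, d i = f s t)
    (i0 : ℕ) (h1 : 1 ≤ i0) (h2 : i0 ≤ k) (h0 : f 0 0 = d i0) :
    ∃ s t, s + t < k ∧ f (s + 1) t ≤ f s t ∧ f s (t + 1) ≤ f s t := by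
  by_contra hc
  push Not at hc
  have main : ∀ m, m ≤ k → ∃ s t, s + t = m ∧ ∃ i, 1 ≤ i ∧ i + m ≤ k ∧ f s t = d i := by
    intro m
    induction m with
    | zero => intro _; exact ⟨0, 0, rfl, i0, h1, by omega, h0⟩
    | succ m ih =>
      intro hm
      obtain ⟨s, t, hst, i, hi1, hi2, hf⟩ := ih (by omega)
      have step : ∀ s' t', s' + t' = m + 1 → f s t < f s' t' →
          ∃ s t, s + t = m + 1 ∧ ∃ i, 1 ≤ i ∧ i + (m + 1) ≤ k ∧ f s t = d i := by
        intro s' t' h hlt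
        obtain ⟨i', hi', hd⟩ := hmem s' t' (by omega)
        refine ⟨s', t', h, i', hi'.1, ?_, hd.symm⟩
        rw [hf, ← hd] at hlt
        have := (hanti.lt_iff_gt (a := i) (b := i') ⟨hi1, by omega⟩ hi').1 hlt
        omega
      rcases le_or_gt (f (s + 1) t) (f s t) with h | h
      · exact step s (t + 1) (by omega) (hc s t (by omega) h)
      · exact step (s + 1) t (by omega) h
  obtain ⟨s, t, _, i, hi1, hi2, _⟩ := main k le_rfl
  omega

/-- Two chords of one level that are `≥ 2k - 1` steps apart cannot both be among the `k` largest
distances. -/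
lemma level_contra {n : ℕ} (hn : 0 < n) (P : Fin n → EuclideanSpace ℝ (Fin 2))
    (hP : ClockwiseConvexPos P)
    (d : ℕ → ℝ) (N : ℕ) (hanti : StrictAntiOn d (Set.Icc 1 N))
    (himg : d '' Set.Icc 1 N = {r : ℝ | ∃ u v : Fin n, u ≠ v ∧ dist (P u) (P v) = r})
    (k : ℕ) (hk1 : 1 ≤ k) (hk2 : k ≤ N) (x y x' y' : ℤ) (hxy : y < x + n) (hx'y' : x' < y')
    (hsum : x + y = x' + y') (hgap : 2 * (k : ℤ) - 1 ≤ x' - x)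
    (i : ℕ) (hi1 : 1 ≤ i) (hi2 : i ≤ k) (hd : dist (perExt hn P x) (perExt hn P y) = d i)
    (i' : ℕ) (hi1' : 1 ≤ i') (hi2' : i' ≤ k)
    (hd' : dist (perExt hn P x') (perExt hn P y') = d i') : False := by
  have hmem : ∀ a b : ℤ, a < b → b < a + n →
      ∃ i ∈ Set.Icc 1 N, d i = dist (perExt hn P a) (perExt hn P b) := by
    intro a b h1 h2
    have : dist (perExt hn P a) (perExt hn P b) ∈ d '' Set.Icc 1 N := by
      rw [himg]; exact perExt_dist_mem hn P a b h1 h2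
    exact this
  obtain ⟨s, t, hst, f1, f2⟩ := walk_stuck d N k hk2 hanti
    (fun s t => dist (perExt hn P (x + s)) (perExt hn P (y - t)))
    (fun s t h => hmem _ _ (by omega) (by omega)) i hi1 hi2 (by simpa using hd)
  obtain ⟨s', t', hst', g1, g2⟩ := walk_stuck d N k hk2 hanti
    (fun s t => dist (perExt hn P (x' - s)) (perExt hn P (y' + t)))
    (fun s t h => hmem _ _ (by omega) (by omega)) i' hi1' hi2' (by simpa using hd')
  push_cast at f1 f2 g1 g2
  set Q := perExt hn P with hQ
  have C : ∀ x y z : ℤ, x < y → y < z → z < x + n → cross2 (Q y - Q x) (Q z - Q x) < 0 :=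
    perExt_cross hn P hP
  -- weak version, orientation at each vertex
  have swap : ∀ u v : EuclideanSpace ℝ (Fin 2), cross2 u v = - cross2 v u := by
    intro u v; simp only [cross2]; ring
  have self0 : ∀ u : EuclideanSpace ℝ (Fin 2), cross2 u u = 0 := by
    intro u; simp only [cross2]; ring
  obtain ⟨a, ha⟩ : ∃ a : ℤ, a = x + s := ⟨_, rfl⟩
  obtain ⟨b, hb⟩ : ∃ b : ℤ, b = y - t := ⟨_, rfl⟩
  obtain ⟨a', ha'⟩ : ∃ a : ℤ, a = x' - s' := ⟨_, rfl⟩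
  obtain ⟨b', hb'⟩ : ∃ b : ℤ, b = y' + t' := ⟨_, rfl⟩
  rw [show x + ((s : ℤ) + 1) = a + 1 by omega, ← ha, ← hb] at f1
  rw [show y - ((t : ℤ) + 1) = b - 1 by omega, ← ha, ← hb] at f2
  rw [show x' - ((s' : ℤ) + 1) = a' - 1 by omega, ← ha', ← hb'] at g1
  rw [show y' + ((t' : ℤ) + 1) = b' + 1 by omega, ← ha', ← hb'] at g2
  have o1 : a + 1 ≤ a' := by omega
  have o2 : a' < b' := by omega
  have o3 : b' + 1 ≤ b := by omega
  have o4 : b < a + n := by omega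
  -- consequence of cyclicity: orientation seen from the other vertices
  have C2 : ∀ x y z : ℤ, x < y → y < z → z < x + n → 0 < cross2 (Q x - Q y) (Q z - Q y) := by
    intro x y z h1 h2 h3
    have := C x y z h1 h2 h3
    rw [cross2_cyc, swap] at this
    linarith
  have C3 : ∀ x y z : ℤ, x < y → y < z → z < x + n → 0 < cross2 (Q y - Q z) (Q x - Q z) := by
    intro x y z h1 h2 h3
    have := C x y z h1 h2 h3
    rw [cross2_cyc, cross2_cyc, swap] at this
    linarith
  refine four_acute (Q a) (Q a') (Q b') (Q b) (C _ _ _ (by omega) (by omega) (by omega))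
    (C _ _ _ (by omega) (by omega) (by omega)) (C _ _ _ (by omega) (by omega) (by omega))
    (C _ _ _ (by omega) (by omega) (by omega)) ?_ ?_ ?_ ?_
  · refine acute_fwd (Q a) (Q (a + 1)) (Q a') (Q b) (C _ _ _ (by omega) (by omega) (by omega))
      (C _ _ _ (by omega) (by omega) (by omega)) ?_ f1
    rcases o1.eq_or_lt with h | h
    · rw [h, self0]
    · exact (C _ _ _ (by omega) (by omega) (by omega)).le
  · refine acute_bwd (Q b) (Q (b - 1)) (Q b') (Q a) (C3 _ _ _ (by omega) (by omega) (by omega))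
      (C3 _ _ _ (by omega) (by omega) (by omega)) ?_ ?_
    · rcases (show b' ≤ b - 1 by omega).eq_or_lt with h | h
      · rw [h, self0]
      · have := C3 b' (b - 1) b (by omega) (by omega) (by omega)
        exact this.le
    · rw [dist_comm (Q (b - 1)), dist_comm (Q b)]; exact f2
  · refine acute_bwd (Q a') (Q (a' - 1)) (Q a) (Q b') (C2 _ _ _ (by omega) (by omega) (by omega))
      (C2 _ _ _ (by omega) (by omega) (by omega)) ?_ g1
    rcases (show a ≤ a' - 1 by omega).eq_or_lt with h | h
    · rw [h, self0]
    · have := C3 a (a' - 1) a' (by omega) (by omega) (by omega)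
      exact this.le
  · refine acute_fwd (Q b') (Q (b' + 1)) (Q b) (Q a') ?_ ?_ ?_ ?_
    · rw [← cross2_cyc]; exact C _ _ _ (by omega) (by omega) (by omega)
    · rw [← cross2_cyc]; exact C _ _ _ (by omega) (by omega) (by omega)
    · rcases o3.eq_or_lt with h | h
      · rw [h, self0]
      · exact (C _ _ _ (by omega) (by omega) (by omega)).le
    · rw [dist_comm (Q (b' + 1)), dist_comm (Q b')]; exact g2

/-- Theorem 1.3: `m₁ + ⋯ + m_k ≤ (2k - 1) n`, where `m_i` is the number of unordered
pairs of vertices of the convex `n`-gon at distance `d i`, the `i`-th largest distance. -/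
theorem stmt9 {n : ℕ} (P : Fin n → EuclideanSpace ℝ (Fin 2)) (hP : ClockwiseConvexPos P)
    (d : ℕ → ℝ) (N : ℕ) (hanti : StrictAntiOn d (Set.Icc 1 N))
    (himg : d '' Set.Icc 1 N = {r : ℝ | ∃ u v : Fin n, u ≠ v ∧ dist (P u) (P v) = r})
    (k : ℕ) (hk1 : 1 ≤ k) (hk2 : k ≤ N) :
    ∑ i ∈ Finset.Icc 1 k,
      ((Finset.univ : Finset (Fin n × Fin n)).filter
        (fun p => p.1 < p.2 ∧ dist (P p.1) (P p.2) = d i)).card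
      ≤ (2 * k - 1) * n := by
  classical
  rcases Nat.eq_zero_or_pos n with h0 | hn
  · subst h0
    simp
  rw [← Finset.card_biUnion]
  swap
  · intro i hi j hj hij
    rw [Function.onFun, Finset.disjoint_left]
    intro p hp hq
    simp only [Finset.mem_filter, Finset.mem_univ, true_and] at hp hq
    simp only [Finset.coe_Icc, Set.mem_Icc, Finset.mem_Icc] at hi hj
    exact hij (hanti.injOn ⟨hi.1, by omega⟩ ⟨hj.1, by omega⟩ (hp.2.symm.trans hq.2))
  set T := (Finset.Icc 1 k).biUnion fun i => (Finset.univ : Finset (Fin n × Fin n)).filter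
        (fun p => p.1 < p.2 ∧ dist (P p.1) (P p.2) = d i) with hT
  have memT : ∀ p ∈ T, p.1 < p.2 ∧ ∃ i, 1 ≤ i ∧ i ≤ k ∧ dist (P p.1) (P p.2) = d i := by
    intro p hp
    simp only [hT, Finset.mem_biUnion, Finset.mem_filter, Finset.mem_univ, true_and,
      Finset.mem_Icc] at hp
    obtain ⟨i, hi, h1, h2⟩ := hp
    exact ⟨h1, i, hi.1, hi.2, h2⟩
  let lev : Fin n × Fin n → ℕ := fun p =>
    if (p.1 : ℕ) + p.2 < n then (p.1 : ℕ) + p.2 else (p.1 : ℕ) + p.2 - n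
  have := Finset.card_le_mul_card_image_of_maps_to (s := T) (t := Finset.range n) (f := lev)
    (by
      intro p _
      have h1 := p.1.2
      have h2 := p.2.2
      simp only [lev, Finset.coe_range, Set.mem_Iio, Finset.mem_range]
      split_ifs <;> omega) (2 * k - 1) ?_
  · simpa using this
  intro r hr
  by_contra hcard
  set S := T.filter (fun p => lev p = r) with hS
  let g : Fin n × Fin n → ℤ := fun p =>
    if (p.1 : ℕ) + p.2 < n then (p.1 : ℤ) else (p.2 : ℤ) - n
  have hg : ∀ p ∈ S, g p < r - g p ∧ (r : ℤ) - g p < g p + n ∧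
      ∃ i, 1 ≤ i ∧ i ≤ k ∧ dist (perExt hn P (g p)) (perExt hn P (r - g p)) = d i := by
    intro p hp
    rw [hS, Finset.mem_filter] at hp
    obtain ⟨hpT, hl⟩ := hp
    obtain ⟨hlt, i, hi1, hi2, hd⟩ := memT p hpT
    rw [Fin.lt_def] at hlt
    have b1 := p.1.2
    have b2 := p.2.2
    simp only [lev] at hl
    simp only [g]
    split_ifs at hl ⊢ with hc
    · refine ⟨by omega, by omega, i, hi1, hi2, ?_⟩
      rw [perExt_eq hn P _ p.1 0 (by omega), perExt_eq hn P _ p.2 0 (by omega), hd]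
    · refine ⟨by omega, by omega, i, hi1, hi2, ?_⟩
      rw [perExt_eq hn P _ p.2 (-1) (by omega), perExt_eq hn P _ p.1 0 (by omega), dist_comm, hd]
  have hinj : Set.InjOn g S := by
    intro p hp q hq hpq
    rw [hS, Finset.mem_coe, Finset.mem_filter] at hp hq
    have e1 := hp.2
    have e2 := hq.2
    have b1 := p.1.2
    have b2 := p.2.2
    have b3 := q.1.2
    have b4 := q.2.2
    have h1 := (memT p hp.1).1
    have h2 := (memT q hq.1).1
    rw [Fin.lt_def] at h1 h2
    simp only [lev] at e1 e2
    simp only [g] at hpq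
    apply Prod.ext <;> apply Fin.ext <;> split_ifs at * <;> omega
  have hci := Finset.card_image_of_injOn hinj
  have hne : (S.image g).Nonempty := by
    rw [← Finset.card_pos, hci]; omega
  have hsub : S.image g ⊆ Finset.Icc ((S.image g).min' hne) ((S.image g).max' hne) := by
    intro z hz
    exact Finset.mem_Icc.2 ⟨Finset.min'_le _ _ hz, Finset.le_max' _ _ hz⟩
  have hle := Finset.card_le_card hsub
  rw [hci, Int.card_Icc] at hle
  obtain ⟨p, hp, hpe⟩ := Finset.mem_image.1 (Finset.min'_mem _ hne)
  obtain ⟨q, hq, hqe⟩ := Finset.mem_image.1 (Finset.max'_mem _ hne)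
  rw [← hpe, ← hqe] at hle
  obtain ⟨p1, p2, i, hi1, hi2, hd⟩ := hg p hp
  obtain ⟨q1, q2, i', hi1', hi2', hd'⟩ := hg q hq
  exact level_contra hn P hP d N hanti himg k hk1 hk2 (g p) (r - g p) (g q) (r - g q) p2 q1
    (by ring) (by omega) i hi1 hi2 hd i' hi1' hi2' hd'
end

section
/- In a convex polygon with vertices a₁, …, aₙ in clockwise order and distinct distances d₁ > d₂ > ⋯, if a, b, c, d are vertices in clockwise order with dist(b,c) ≥ d_k and dist(a,d) ≥ d_k, then either there are at most 2k − 3 vertices strictly between a and b, or at most 2k − 3 vertices strictly between c and d. -/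
theorem s14_corner (p0 p1 q0 q1 r0 r1 : ℝ) (hpr : p0 * r1 - p1 * r0 < 0)
    (hqr : q0 * r1 - q1 * r0 < 0) (hpq : p0 * q1 - p1 * q0 ≤ 0)
    (hd : 0 < p0 * r0 + p1 * r1) : 0 < q0 * r0 + q1 * r1 := by
  by_contra hcon
  push Not at hcon
  have h1 : (p0 * r1 - p1 * r0) * (q0 * r0 + q1 * r1)
      = (q0 * r1 - q1 * r0) * (p0 * r0 + p1 * r1)
        + (p0 * q1 - p1 * q0) * (r0 ^ 2 + r1 ^ 2) := by ring
  have h2 := mul_nonneg_of_nonpos_of_nonpos hpr.le hcon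
  have h3 := mul_neg_of_neg_of_pos hqr hd
  have h4 : (p0 * q1 - p1 * q0) * (r0 ^ 2 + r1 ^ 2) ≤ 0 :=
    mul_nonpos_of_nonpos_of_nonneg hpq (by positivity)
  linarith

theorem s14_turn (u0 u1 v0 v1 w0 w1 : ℝ) (huv : u0 * v1 - u1 * v0 < 0)
    (hvw : v0 * w1 - v1 * w0 < 0) (duv : u0 * v0 + u1 * v1 < 0)
    (dvw : v0 * w0 + v1 * w1 < 0) : 0 < u0 * w1 - u1 * w0 := by
  have h1 : (v0 ^ 2 + v1 ^ 2) * (u0 * w1 - u1 * w0)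
      = (u0 * v1 - u1 * v0) * (v0 * w0 + v1 * w1)
        + (u0 * v0 + u1 * v1) * (v0 * w1 - v1 * w0) := by ring
  have h2 := mul_pos_of_neg_of_neg huv dvw
  have h3 := mul_pos_of_neg_of_neg duv hvw
  have h4 : 0 ≤ v0 ^ 2 + v1 ^ 2 := by positivity
  by_contra hcon
  push Not at hcon
  have := mul_nonpos_of_nonneg_of_nonpos h4 hcon
  linarith

theorem s14_cross {n : ℕ} (P : Fin n → EuclideanSpace ℝ (Fin 2)) (hP : ClockwiseConvexPos P)
    (i j k : Fin n) (h1 : i < j) (h2 : j < k) :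
    (P j 0 - P i 0) * (P k 1 - P i 1) - (P j 1 - P i 1) * (P k 0 - P i 0) < 0 := by
  simpa [cross2] using hP i j k h1 h2

theorem s14_cross_le {n : ℕ} (P : Fin n → EuclideanSpace ℝ (Fin 2)) (hP : ClockwiseConvexPos P)
    (i j k : Fin n) (h1 : i ≤ j) (h2 : j ≤ k) :
    (P j 0 - P i 0) * (P k 1 - P i 1) - (P j 1 - P i 1) * (P k 0 - P i 0) ≤ 0 := by
  rcases h1.eq_or_lt with rfl | h1
  · simp
  rcases h2.eq_or_lt with rfl | h2
  · exact le_of_eq (by ring)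
  exact (s14_cross P hP i j k h1 h2).le

/-- if moving `x` to `x_p` does not increase the distance to `y`, the angle at `x` is acute -/
theorem s14_dot (x x_p y : EuclideanSpace ℝ (Fin 2)) (hne : x ≠ x_p)
    (h : dist x_p y ≤ dist x y) :
    0 < (x_p 0 - x 0) * (y 0 - x 0) + (x_p 1 - x 1) * (y 1 - x 1) := by
  have h2 : dist x_p y ^ 2 ≤ dist x y ^ 2 := pow_le_pow_left₀ dist_nonneg h 2
  have h3 : 0 < dist x x_p ^ 2 := by
    have := dist_pos.2 hne
    positivity
  rw [EuclideanSpace.dist_eq, Real.sq_sqrt (by positivity)] at h2 h3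
  rw [EuclideanSpace.dist_eq, Real.sq_sqrt (by positivity)] at h2
  simp only [Fin.sum_univ_two, Real.dist_eq, sq_abs] at h2 h3
  nlinarith

theorem s14_inj {n : ℕ} (P : Fin n → EuclideanSpace ℝ (Fin 2)) (hP : ClockwiseConvexPos P)
    (a b c : Fin n) (hab : a < b) (hbc : b < c) (u v : Fin n) (huv : u < v) : P u ≠ P v := by
  intro h
  obtain ⟨w, hwu, hwv⟩ : ∃ w : Fin n, w ≠ u ∧ w ≠ v := by
    by_contra hcon
    push Not at hcon
    have h1 := hcon a
    have h2 := hcon b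
    have h3 := hcon c
    simp only [ne_eq, Fin.ext_iff, Fin.lt_def] at *
    omega
  rcases lt_or_gt_of_ne hwu with h1 | h1
  · have := s14_cross P hP w u v h1 huv
    rw [h] at this
    linarith
  rcases lt_or_gt_of_ne hwv with h2 | h2
  · have := s14_cross P hP u w v h1 h2
    rw [h] at this
    linarith
  · have := s14_cross P hP u v w huv h2
    rw [h] at this
    linarith

/-- one of the four inward moves increases the corresponding distance -/
theorem s14_step {n : ℕ} (P : Fin n → EuclideanSpace ℝ (Fin 2)) (hP : ClockwiseConvexPos P)
    (a a_p b_p b c c_p d_p d : Fin n) (h1 : a < a_p) (h2 : a_p ≤ b) (h3 : a ≤ b_p) (h4 : b_p < b)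
    (hbc : b < c) (h5 : c < c_p) (h6 : c_p ≤ d) (h7 : c ≤ d_p) (h8 : d_p < d)
    (ha : dist (P a_p) (P d) ≤ dist (P a) (P d))
    (hb : dist (P b_p) (P c) ≤ dist (P b) (P c))
    (hc : dist (P c_p) (P b) ≤ dist (P c) (P b))
    (hd : dist (P d_p) (P a) ≤ dist (P d) (P a)) : False := by
  have hab : a < b := h1.trans_le h2
  have hcd : c < d := h5.trans_le h6
  have inj := s14_inj P hP a b c hab hbc
  have da := s14_dot _ _ _ (inj _ _ h1) ha
  have db := s14_dot _ _ _ (inj _ _ h4).symm hb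
  have dc := s14_dot _ _ _ (inj _ _ h5) hc
  have dd := s14_dot _ _ _ (inj _ _ h8).symm hd
  have abc := s14_cross P hP a b c hab hbc
  have abd := s14_cross P hP a b d hab (hbc.trans hcd)
  have acd := s14_cross P hP a c d (hab.trans hbc) hcd
  have bcd := s14_cross P hP b c d hbc hcd
  have ea := s14_corner _ _ (P b 0 - P a 0) (P b 1 - P a 1) _ _
    (s14_cross P hP a a_p d h1 (h2.trans_lt (hbc.trans hcd))) abd
    (s14_cross_le P hP a a_p b h1.le h2) da
  have eb := s14_corner (-(P b_p 0 - P b 0)) (P b_p 1 - P b 1) (-(P a 0 - P b 0)) (P a 1 - P b 1)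
    (-(P c 0 - P b 0)) (P c 1 - P b 1)
    (by linarith [s14_cross P hP b_p b c h4 hbc]) (by linarith)
    (by linarith [s14_cross_le P hP a b_p b h3 h4.le]) (by linarith)
  have ec := s14_corner (P c_p 0 - P c 0) (P c_p 1 - P c 1) (P d 0 - P c 0) (P d 1 - P c 1)
    (P b 0 - P c 0) (P b 1 - P c 1)
    (by linarith [s14_cross P hP b c c_p hbc h5]) (by linarith)
    (by linarith [s14_cross_le P hP c c_p d h5.le h6]) (by linarith)
  have ed := s14_corner (-(P d_p 0 - P d 0)) (P d_p 1 - P d 1) (-(P c 0 - P d 0)) (P c 1 - P d 1)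
    (-(P a 0 - P d 0)) (P a 1 - P d 1)
    (by linarith [s14_cross P hP a d_p d (hab.trans (hbc.trans_le h7)) h8]) (by linarith)
    (by linarith [s14_cross_le P hP c d_p d h7 h8.le]) (by linarith)
  have t1 := s14_turn (P b 0 - P a 0) (P b 1 - P a 1) (P c 0 - P b 0) (P c 1 - P b 1)
    (P d 0 - P c 0) (P d 1 - P c 1) (by linarith) (by linarith) (by linarith) (by linarith)
  have t2 := s14_turn (P d 0 - P c 0) (P d 1 - P c 1) (P a 0 - P d 0) (P a 1 - P d 1)
    (P b 0 - P a 0) (P b 1 - P a 1) (by linarith) (by linarith) (by linarith) (by linarith)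
  linarith

theorem s14_main {n : ℕ} (P : Fin n → EuclideanSpace ℝ (Fin 2)) (hP : ClockwiseConvexPos P)
    (d : ℕ → ℝ) (N : ℕ) (hanti : StrictAntiOn d (Set.Icc 1 N))
    (himg : d '' Set.Icc 1 N = {r : ℝ | ∃ u v : Fin n, u ≠ v ∧ dist (P u) (P v) = r})
    (m : ℕ) : ∀ (i j : ℕ) (_ : i + j = m) (_ : i ∈ Set.Icc 1 N) (_ : j ∈ Set.Icc 1 N)
    (a b c e : Fin n) (_ : a.val + (i + j - 1) ≤ b.val) (_ : b ≤ c)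
    (_ : c.val + (i + j - 1) ≤ e.val)
    (_ : d i ≤ dist (P b) (P c)) (_ : d j ≤ dist (P a) (P e)), False := by
  have next : ∀ i ∈ Set.Icc 1 N, ∀ x y : Fin n, x ≠ y → d i < dist (P x) (P y) →
      ∃ i_p ∈ Set.Icc 1 N, i_p < i ∧ d i_p ≤ dist (P x) (P y) := by
    intro i hi x y hxy hlt
    have : dist (P x) (P y) ∈ d '' Set.Icc 1 N := by
      rw [himg]; exact ⟨x, y, hxy, rfl⟩
    obtain ⟨i_p, hi_p, he⟩ := this
    refine ⟨i_p, hi_p, ?_, he.le⟩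
    rw [← he] at hlt
    exact (hanti.lt_iff_gt hi hi_p).1 hlt
  induction m using Nat.strong_induction_on with
  | _ m ih =>
  intro i j hm hi hj a b c e hab hbc hce hd1 hd2
  have hi1 := hi.1
  have hj1 := hj.1
  have hab_p : a < b := by rw [Fin.lt_def]; omega
  have hce_p : c < e := by rw [Fin.lt_def]; omega
  have hbc_p : b < c := by
    refine lt_of_le_of_ne hbc ?_
    rintro rfl
    rw [dist_self] at hd1
    have : d i ∈ d '' Set.Icc 1 N := ⟨i, hi, rfl⟩
    rw [himg] at this
    obtain ⟨u, v, huv, he⟩ := this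
    have h0 : P u = P v := by
      rw [← dist_le_zero, he]; exact hd1
    rcases lt_or_gt_of_ne huv with h | h
    · exact s14_inj P hP a b e hab_p hce_p u v h h0
    · exact s14_inj P hP a b e hab_p hce_p v u h h0.symm
  have lab := Fin.lt_def.1 hab_p
  have lbc := Fin.lt_def.1 hbc_p
  have lce := Fin.lt_def.1 hce_p
  have le := e.isLt
  obtain ⟨a_p, ha_p⟩ : ∃ x : Fin n, x.val = a.val + 1 := ⟨⟨a.val + 1, by omega⟩, rfl⟩
  obtain ⟨b_p, hb_p⟩ : ∃ x : Fin n, x.val + 1 = b.val := ⟨⟨b.val - 1, by omega⟩, by simp; omega⟩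
  obtain ⟨c_p, hc_p⟩ : ∃ x : Fin n, x.val = c.val + 1 := ⟨⟨c.val + 1, by omega⟩, rfl⟩
  obtain ⟨e_p, he_p⟩ : ∃ x : Fin n, x.val + 1 = e.val := ⟨⟨e.val - 1, by omega⟩, by simp; omega⟩
  by_cases ca : dist (P a) (P e) < dist (P a_p) (P e)
  · obtain ⟨j_p, hj_p, hlt, hle⟩ := next j hj a_p e (by rw [ne_eq, Fin.ext_iff]; omega)
      (hd2.trans_lt ca)
    have := hj_p.1
    exact ih (i + j_p) (by omega) i j_p rfl hi hj_p a_p b c e (by omega) hbc (by omega) hd1 hle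
  by_cases ce : dist (P e) (P a) < dist (P e_p) (P a)
  · rw [dist_comm, dist_comm (P e_p)] at ce
    obtain ⟨j_p, hj_p, hlt, hle⟩ := next j hj a e_p (by rw [ne_eq, Fin.ext_iff]; omega)
      (hd2.trans_lt ce)
    have := hj_p.1
    exact ih (i + j_p) (by omega) i j_p rfl hi hj_p a b c e_p (by omega) hbc (by omega) hd1 hle
  by_cases cb : dist (P b) (P c) < dist (P b_p) (P c)
  · obtain ⟨i_p, hi_p, hlt, hle⟩ := next i hi b_p c (by rw [ne_eq, Fin.ext_iff]; omega)
      (hd1.trans_lt cb)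
    have := hi_p.1
    exact ih (i_p + j) (by omega) i_p j rfl hi_p hj a b_p c e (by omega)
      (by rw [Fin.le_def]; omega) (by omega) hle hd2
  by_cases cc : dist (P c) (P b) < dist (P c_p) (P b)
  · rw [dist_comm, dist_comm (P c_p)] at cc
    obtain ⟨i_p, hi_p, hlt, hle⟩ := next i hi b c_p (by rw [ne_eq, Fin.ext_iff]; omega)
      (hd1.trans_lt cc)
    have := hi_p.1
    exact ih (i_p + j) (by omega) i_p j rfl hi_p hj a b c_p e (by omega)
      (by rw [Fin.le_def]; omega) (by omega) hle hd2
  exact s14_step P hP a a_p b_p b c c_p e_p e (by rw [Fin.lt_def]; omega) (by rw [Fin.le_def]; omega)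
    (by rw [Fin.le_def]; omega) (by rw [Fin.lt_def]; omega) hbc_p
    (by rw [Fin.lt_def]; omega) (by rw [Fin.le_def]; omega)
    (by rw [Fin.le_def]; omega) (by rw [Fin.lt_def]; omega)
    (not_lt.1 ca) (not_lt.1 cb) (not_lt.1 cc) (not_lt.1 ce)

/-- Case `i = j = k` of Fact 3: if `a, b, c, d` are vertices in clockwise order
(possibly `b = c`) with `dist b c ≥ d k` and `dist a d ≥ d k`, then there are at most
`2k - 3` vertices strictly between `a` and `b`, or at most `2k - 3` strictly between
`c` and `d` (inequalities over ℤ). -/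
theorem stmt14 {n : ℕ} (P : Fin n → EuclideanSpace ℝ (Fin 2)) (hP : ClockwiseConvexPos P)
    (d : ℕ → ℝ) (N : ℕ) (hanti : StrictAntiOn d (Set.Icc 1 N))
    (himg : d '' Set.Icc 1 N = {r : ℝ | ∃ u v : Fin n, u ≠ v ∧ dist (P u) (P v) = r})
    (k : ℕ) (hk : k ∈ Set.Icc 1 N)
    (a b c dd : Fin n) (hab : a < b) (hbc : b ≤ c) (hcd : c < dd)
    (hbcdist : d k ≤ dist (P b) (P c)) (haddist : d k ≤ dist (P a) (P dd)) :
    ((b.val : ℤ) - a.val - 1 ≤ 2 * (k : ℤ) - 3) ∨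
    ((dd.val : ℤ) - c.val - 1 ≤ 2 * (k : ℤ) - 3) := by
  by_contra hcon
  push Not at hcon
  obtain ⟨h1, h2⟩ := hcon
  have hk1 := hk.1
  exact s14_main P hP d N hanti himg (k + k) k k rfl hk hk a b c dd (by omega) hbc (by omega)
    hbcdist haddist
end
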